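/- Let (X, μ) be a probability space and T : X → X an invertible measure-preserving transformation that is weakly mixing, i.e., T × T is ergodic with respect to μ × μ. Let U : L²(μ) → L²(μ) be the Koopman operator Uf = f ∘ T, and let Θ : L²(μ) → L²(μ) be the operator Θf = (∫ f dμ)·1. Suppose P and P′ are bounded linear operators on L²(μ) that are positive (f ≥ 0 a.e. implies Pf ≥ 0 a.e. and P′f ≥ 0 a.e.), satisfy P1 = 1, P*1 = 1, P′1 = 1, (P′)*1 = 1, and commute with U. If Θ = a·P + (1−a)·P′ for some real a with 0 < a < 1, then P = Θ. -/

import Mathlib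

/-!
The measurable structure on `X` is arbitrary and `T⁻¹` need not be measurable, so neither a
disintegration of joinings nor unitarity of `U` is available; the proof uses instead that `P` is of
Hilbert–Schmidt type, together with the mean ergodic theorem for `T × T`.

Domination: since `P'` is positive, `a • P ≤ Θ` on nonnegative functions, hence
`|P h| ≤ a⁻¹ * ‖h‖` almost everywhere (`ae_abs_apply_le`). Applying this simultaneously to all linear
combinations of finitely many vectors `h i` and optimizing the coefficients pointwise gives
`∑ i, ‖P (h i)‖² ≤ C² * (∑ i, ∑ j, ⟪h i, h j⟫²) ^ (1/2)` with `C = a⁻¹` (`sum_norm_sq_apply_le`).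

Take `h i = U ^ i f` for `i < N`, with `∫ f = 0`. As `P` commutes with the isometry `U`, the left side
is `N * ‖P f‖²`. Since `⟪U ^ i f, U ^ j f⟫²` is the inner product in `L²(μ × μ)` of the images of
`f ⊗ f` under the powers of the Koopman operator of `T × T`, the root on the right side is `N` times
the norm of the `N`-th ergodic average of `f ⊗ f`. That average tends to `0` because `T × T` is
ergodic and `∫ f ⊗ f = 0` (`tendsto_birkhoffAverage_zero`). Thus `P f = 0` for every mean-zero `f`,
and `P 1 = 1` settles the constants.
-/

open MeasureTheory Filter

open scoped RealInnerProductSpace Topology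

namespace MarkovExtreme

/-- The duality step of the Hilbert–Schmidt estimate: take the coefficients `c = v` and bound the
Gram matrix by its Frobenius norm. -/
lemma sum_sq_le_of_forall_abs_le {ι E : Type*} [Fintype ι] [NormedAddCommGroup E]
    [InnerProductSpace ℝ E] (v : ι → ℝ) (h : ι → E) {C : ℝ}
    (H : ∀ c : ι → ℝ, |∑ i, c i * v i| ≤ C * ‖∑ i, c i • h i‖) :
    ∑ i, v i ^ 2 ≤ C ^ 2 * √(∑ i, ∑ j, ⟪h i, h j⟫ ^ 2) := by
  set S := ∑ i, v i ^ 2 with hS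
  set G := ∑ i, ∑ j, ⟪h i, h j⟫ ^ 2 with hG
  have hS0 : 0 ≤ S := Finset.sum_nonneg fun i _ => sq_nonneg _
  have hG0 : 0 ≤ G := Finset.sum_nonneg fun i _ => Finset.sum_nonneg fun j _ => sq_nonneg _
  have h1 : S ≤ C * ‖∑ i, v i • h i‖ := by
    have := H v
    simp only [← pow_two] at this
    exact (le_abs_self _).trans this
  have h2 : ‖∑ i, v i • h i‖ ^ 2 = ∑ p : ι × ι, (v p.1 * v p.2) * ⟪h p.1, h p.2⟫ := by
    rw [← real_inner_self_eq_norm_sq, sum_inner, Fintype.sum_prod_type]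
    refine Finset.sum_congr rfl fun i _ => ?_
    rw [inner_sum]
    refine Finset.sum_congr rfl fun j _ => ?_
    rw [real_inner_smul_left, real_inner_smul_right]
    ring
  have h3 : ‖∑ i, v i • h i‖ ^ 2 ≤ S * √G := by
    have hcs := Finset.sum_mul_sq_le_sq_mul_sq (Finset.univ : Finset (ι × ι))
      (fun p => v p.1 * v p.2) (fun p => ⟪h p.1, h p.2⟫)
    have e1 : ∑ p : ι × ι, (v p.1 * v p.2) ^ 2 = S ^ 2 := by
      rw [Fintype.sum_prod_type, pow_two S, hS, Finset.sum_mul_sum]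
      simp only [mul_pow]
    have e2 : ∑ p : ι × ι, ⟪h p.1, h p.2⟫ ^ 2 = G := by rw [Fintype.sum_prod_type]
    rw [e1, e2, ← h2] at hcs
    refine (sq_le_sq₀ (by positivity) (by positivity)).1 ?_
    rw [mul_pow, Real.sq_sqrt hG0]
    exact hcs
  rcases hS0.eq_or_lt with h0 | h0
  · rw [← h0]; positivity
  · have h4 : S * S ≤ S * (C ^ 2 * √G) := by
      calc S * S = S ^ 2 := by ring
        _ ≤ (C * ‖∑ i, v i • h i‖) ^ 2 := by gcongr
        _ = C ^ 2 * ‖∑ i, v i • h i‖ ^ 2 := by ring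
        _ ≤ C ^ 2 * (S * √G) := by gcongr
        _ = S * (C ^ 2 * √G) := by ring
    exact le_of_mul_le_mul_left h4 h0

variable {X : Type*} [MeasurableSpace X] {μ : Measure X}

lemma norm_sq_eq_integral (g : Lp ℝ 2 μ) : ‖g‖ ^ 2 = ∫ x, g x ^ 2 ∂μ := by
  rw [← real_inner_self_eq_norm_sq, L2.inner_def]
  simp [pow_two]

lemma integrable_sq (g : Lp ℝ 2 μ) : Integrable (fun x => g x ^ 2) μ :=
  (memLp_two_iff_integrable_sq (Lp.aestronglyMeasurable g)).1 (Lp.memLp g)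

lemma coeFn_sum_smul {ι : Type*} (s : Finset ι) (c : ι → ℝ) (g : ι → Lp ℝ 2 μ) :
    ((∑ i ∈ s, c i • g i : Lp ℝ 2 μ) : X → ℝ) =ᵐ[μ] fun x => ∑ i ∈ s, c i * g i x := by
  classical
  induction s using Finset.induction_on with
  | empty =>
    filter_upwards [Lp.coeFn_zero ℝ 2 μ] with x hx
    simpa using hx
  | insert i s hi ih =>
    rw [Finset.sum_insert hi]
    filter_upwards [ih, Lp.coeFn_add (c i • g i) (∑ i ∈ s, c i • g i),
      Lp.coeFn_smul (c i) (g i)] with x h1 h2 h3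
    rw [h2, Pi.add_apply, h1, h3, Finset.sum_insert hi]
    simp

/-- An operator on a probability `L²` space that is bounded from `L²` to `L^∞` satisfies a
Hilbert–Schmidt type estimate on every finite family of vectors. -/
lemma sum_norm_sq_apply_le [IsProbabilityMeasure μ] {ι : Type*} [Fintype ι]
    (P : Lp ℝ 2 μ →L[ℝ] Lp ℝ 2 μ) {C : ℝ}
    (hP : ∀ g : Lp ℝ 2 μ, ∀ᵐ x ∂μ, |P g x| ≤ C * ‖g‖) (h : ι → Lp ℝ 2 μ) :
    ∑ i, ‖P (h i)‖ ^ 2 ≤ C ^ 2 * √(∑ i, ∑ j, ⟪h i, h j⟫ ^ 2) := by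
  -- Rational coefficients give countably many conditions, hence one common null set.
  have hrat : ∀ᵐ x ∂μ, ∀ q : ι → ℚ,
      |∑ i, (q i : ℝ) * P (h i) x| ≤ C * ‖∑ i, (q i : ℝ) • h i‖ := by
    rw [ae_all_iff]
    intro q
    have e : P (∑ i, (q i : ℝ) • h i) = ∑ i, (q i : ℝ) • P (h i) := by
      simp only [map_sum, map_smul]
    filter_upwards [hP (∑ i, (q i : ℝ) • h i),
      coeFn_sum_smul Finset.univ (fun i => (q i : ℝ)) (fun i => P (h i))] with x h1 h2
    rwa [e, h2] at h1
  have hpt : ∀ᵐ x ∂μ, ∑ i, (P (h i) x) ^ 2 ≤ C ^ 2 * √(∑ i, ∑ j, ⟪h i, h j⟫ ^ 2) := by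
    filter_upwards [hrat] with x hx
    refine sum_sq_le_of_forall_abs_le (fun i => P (h i) x) h fun c => ?_
    have hd : DenseRange (Pi.map (fun _ : ι => ((↑) : ℚ → ℝ))) :=
      DenseRange.piMap fun _ => Rat.denseRange_cast
    refine hd.induction_on (p := fun c : ι → ℝ =>
      |∑ i, c i * P (h i) x| ≤ C * ‖∑ i, c i • h i‖) c ?_ fun q => hx q
    exact isClosed_le (by fun_prop) (by fun_prop)
  calc ∑ i, ‖P (h i)‖ ^ 2 = ∫ x, ∑ i, (P (h i) x) ^ 2 ∂μ := by
        rw [integral_finsetSum _ fun i _ => integrable_sq _]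
        simp only [norm_sq_eq_integral]
    _ ≤ ∫ _, C ^ 2 * √(∑ i, ∑ j, ⟪h i, h j⟫ ^ 2) ∂μ :=
        integral_mono_ae (integrable_finsetSum _ fun i _ => integrable_sq _)
          (integrable_const _) hpt
    _ = _ := by simp

lemma memLp_tensor [SFinite μ] (f : Lp ℝ 2 μ) :
    MemLp (fun p : X × X => f p.1 * f p.2) 2 (μ.prod μ) := by
  have hm : AEStronglyMeasurable (fun p : X × X => f p.1 * f p.2) (μ.prod μ) :=
    ((Lp.stronglyMeasurable f).comp_measurable measurable_fst).mul
      ((Lp.stronglyMeasurable f).comp_measurable measurable_snd) |>.aestronglyMeasurable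
  rw [memLp_two_iff_integrable_sq hm]
  simp only [mul_pow]
  exact (integrable_sq f).mul_prod (integrable_sq f)

/-- The tensor square `f ⊗ f`, the class of `(x, y) ↦ f x * f y` in `L²(μ × μ)`. -/
noncomputable def tensor [SFinite μ] (f : Lp ℝ 2 μ) : Lp ℝ 2 (μ.prod μ) :=
  (memLp_tensor f).toLp _

lemma coeFn_tensor [SFinite μ] (f : Lp ℝ 2 μ) :
    (tensor f : X × X → ℝ) =ᵐ[μ.prod μ] fun p => f p.1 * f p.2 :=
  (memLp_tensor f).coeFn_toLp

lemma inner_tensor [SFinite μ] (f g : Lp ℝ 2 μ) : ⟪tensor f, tensor g⟫ = ⟪f, g⟫ ^ 2 := by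
  rw [L2.inner_def, L2.inner_def, pow_two, ← integral_prod_mul]
  refine integral_congr_ae ?_
  filter_upwards [coeFn_tensor f, coeFn_tensor g] with p h1 h2
  rw [h1, h2]
  simp only [RCLike.inner_apply, conj_trivial]
  ring

/-- The mean ergodic theorem on `L²(μ × μ)`: the averages of a tensor square of a mean-zero function
vanish in the limit, the fixed vectors being constant by ergodicity. -/
lemma tendsto_birkhoffAverage_zero [IsProbabilityMeasure μ] {S : X × X → X × X}
    (hS : Ergodic S (μ.prod μ)) (f : Lp ℝ 2 μ) (hf : ∫ x, f x ∂μ = 0)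
    (V : Lp ℝ 2 (μ.prod μ) →L[ℝ] Lp ℝ 2 (μ.prod μ)) (hV : ∀ g, ‖V g‖ = ‖g‖)
    (hVS : ∀ g, (V g : X × X → ℝ) =ᵐ[μ.prod μ] g ∘ S) :
    Tendsto (fun n => birkhoffAverage ℝ V id n (tensor f)) atTop (𝓝 0) := by
  have hmain := V.tendsto_birkhoffAverage_orthogonalProjection
    (V.opNorm_le_bound zero_le_one fun g => by rw [hV, one_mul]) (tensor f)
  set K := V.eqLocus (1 : Lp ℝ 2 (μ.prod μ) →L[ℝ] Lp ℝ 2 (μ.prod μ))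
  have horth : tensor f ∈ Kᗮ := by
    rw [Submodule.mem_orthogonal']
    intro g hg
    have hg' : V g = g := hg
    obtain ⟨c, hc⟩ := hS.ae_eq_const_of_ae_eq_comp_ae (Lp.aestronglyMeasurable g)
      ((hVS g).symm.trans (by rw [hg']))
    rw [L2.inner_def]
    calc ∫ p, ⟪tensor f p, g p⟫ ∂(μ.prod μ) = ∫ p, c * (f p.1 * f p.2) ∂(μ.prod μ) := by
          refine integral_congr_ae ?_
          filter_upwards [coeFn_tensor f, hc] with p h1 h2
          rw [h1, h2]
          simp
      _ = 0 := by rw [integral_const_mul, integral_prod_mul, hf]; simp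
  have h0 : K.orthogonalProjectionOnto (tensor f) = 0 :=
    K.orthogonalProjectionOnto_eq_zero_iff.2 horth
  rw [h0] at hmain
  simpa using hmain

/-- The Hilbert–Schmidt estimate along an orbit of `U`, averaged: the Frobenius norm of the Gram
matrix of `f, U f, …` is an ergodic average of `f ⊗ f`. -/
lemma apply_eq_zero_of_integral_eq_zero [IsProbabilityMeasure μ] {T : X → X}
    (hT : MeasurePreserving T μ μ)
    (hwm : Ergodic (fun p : X × X => (T p.1, T p.2)) (μ.prod μ))
    (U P : Lp ℝ 2 μ →L[ℝ] Lp ℝ 2 μ)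
    (hU : ∀ g : Lp ℝ 2 μ, (U g : X → ℝ) =ᵐ[μ] fun x => g (T x))
    (hPU : P ∘L U = U ∘L P) {C : ℝ}
    (hP : ∀ g : Lp ℝ 2 μ, ∀ᵐ x ∂μ, |P g x| ≤ C * ‖g‖)
    (f : Lp ℝ 2 μ) (hf : ∫ x, f x ∂μ = 0) : P f = 0 := by
  have hUeq : ∀ g, U g = Lp.compMeasurePreserving T hT g := fun g =>
    Lp.ext ((hU g).trans (Lp.coeFn_compMeasurePreserving g hT).symm)
  have hUnorm : ∀ g, ‖U g‖ = ‖g‖ := fun g => by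
    rw [hUeq, Lp.norm_compMeasurePreserving]
  have hUit : ∀ (n : ℕ) g, ‖U^[n] g‖ = ‖g‖ := by
    intro n
    induction n with
    | zero => intro g; rfl
    | succ n ih => intro g; rw [Function.iterate_succ_apply, ih, hUnorm]
  have hcomm : Function.Commute P U := fun g => DFunLike.congr_fun hPU g
  have hmp := hwm.toMeasurePreserving
  let V : Lp ℝ 2 (μ.prod μ) →L[ℝ] Lp ℝ 2 (μ.prod μ) :=
    (Lp.compMeasurePreservingₗᵢ ℝ _ hmp).toContinuousLinearMap
  have hVn : ∀ g, ‖V g‖ = ‖g‖ := fun g => Lp.norm_compMeasurePreserving g hmp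
  have hVS : ∀ g, (V g : X × X → ℝ) =ᵐ[μ.prod μ] g ∘ (fun p : X × X => (T p.1, T p.2)) :=
    fun g => Lp.coeFn_compMeasurePreserving g hmp
  have hVt : ∀ g, V (tensor g) = tensor (U g) := by
    intro g
    refine Lp.ext ?_
    have h1 := Measure.quasiMeasurePreserving_fst (μ := μ) (ν := μ) |>.ae (hU g)
    have h2 := Measure.quasiMeasurePreserving_snd (μ := μ) (ν := μ) |>.ae (hU g)
    filter_upwards [hVS (tensor g), coeFn_tensor (U g), h1, h2,
      hmp.quasiMeasurePreserving.ae (coeFn_tensor g)] with p e1 e2 e3 e4 e5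
    rw [e1, e2, e3, e4, Function.comp_apply, e5]
  have hVit : ∀ n : ℕ, V^[n] (tensor f) = tensor (U^[n] f) := by
    intro n
    induction n with
    | zero => rfl
    | succ n ih => rw [Function.iterate_succ_apply', ih, hVt, Function.iterate_succ_apply']
  have hlim := tendsto_birkhoffAverage_zero hwm f hf V hVn hVS
  have hbound : ∀ N : ℕ, 0 < N →
      ‖P f‖ ^ 2 ≤ C ^ 2 * ‖birkhoffAverage ℝ V id N (tensor f)‖ := by
    intro N hN
    have hN' : (0 : ℝ) < N := by exact_mod_cast hN
    have hs := sum_norm_sq_apply_le P hP (fun i : Fin N => U^[i] f)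
    have e1 : ∀ n : ℕ, ‖P (U^[n] f)‖ = ‖P f‖ := fun n => by
      rw [(hcomm.iterate_right n) f, hUit]
    have e2 : ∑ i : Fin N, ∑ j : Fin N, ⟪U^[i] f, U^[j] f⟫ ^ 2
        = ‖∑ i : Fin N, V^[i] (tensor f)‖ ^ 2 := by
      rw [← real_inner_self_eq_norm_sq, sum_inner]
      simp only [inner_sum, hVit, inner_tensor]
    have e3 : ‖birkhoffAverage ℝ V id N (tensor f)‖
        = (N : ℝ)⁻¹ * ‖∑ i : Fin N, V^[i] (tensor f)‖ := by
      rw [birkhoffAverage, birkhoffSum, norm_smul, Finset.sum_range]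
      simp
    simp only [e1] at hs
    rw [e2, Real.sqrt_sq (norm_nonneg _)] at hs
    simp only [Finset.sum_const, Finset.card_univ, Fintype.card_fin, nsmul_eq_mul] at hs
    rw [e3, mul_left_comm, le_inv_mul_iff₀ hN']
    exact hs
  have h0 : ‖P f‖ ^ 2 ≤ 0 := by
    have hl := (hlim.norm.const_mul (C ^ 2))
    rw [norm_zero, mul_zero] at hl
    refine ge_of_tendsto hl ?_
    filter_upwards [eventually_gt_atTop 0] with N hN using hbound N hN
  have : ‖P f‖ = 0 := by
    have := le_antisymm h0 (sq_nonneg _)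
    simpa using this
  exact norm_eq_zero.1 this

lemma integral_abs_le_norm [IsProbabilityMeasure μ] (one : Lp ℝ 2 μ)
    (hone : (one : X → ℝ) =ᵐ[μ] fun _ => (1 : ℝ)) (h : Lp ℝ 2 μ) :
    ∫ x, (|h| : Lp ℝ 2 μ) x ∂μ ≤ ‖h‖ := by
  have h1 : ‖one‖ = 1 := by
    have : ‖one‖ ^ 2 = 1 := by
      rw [norm_sq_eq_integral]
      have : (fun x => one x ^ 2) =ᵐ[μ] fun _ => (1 : ℝ) := by
        filter_upwards [hone] with x hx
        rw [hx, one_pow]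
      rw [integral_congr_ae this]
      simp
    exact (pow_eq_one_iff_of_nonneg (norm_nonneg _) two_ne_zero).1 this
  have h2 : ∫ x, (|h| : Lp ℝ 2 μ) x ∂μ = ⟪one, |h|⟫ := by
    rw [L2.inner_def]
    refine integral_congr_ae ?_
    filter_upwards [hone] with x hx
    rw [hx]
    simp
  rw [h2]
  refine (real_inner_le_norm _ _).trans ?_
  rw [h1, one_mul, norm_abs_eq_norm]

/-- A positive operator occurring with weight `a` in a positive decomposition of `Θ` maps `L²`
boundedly into `L^∞`, since `a * |P h| ≤ a * P |h| ≤ Θ |h| = ∫ |h| ≤ ‖h‖`. -/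
lemma ae_abs_apply_le [IsProbabilityMeasure μ]
    (Θ P P' : Lp ℝ 2 μ →L[ℝ] Lp ℝ 2 μ)
    (hΘ : ∀ g : Lp ℝ 2 μ, (Θ g : X → ℝ) =ᵐ[μ] fun _ => ∫ x, g x ∂μ)
    (hPpos : ∀ g : Lp ℝ 2 μ, (∀ᵐ x ∂μ, 0 ≤ g x) → (∀ᵐ x ∂μ, 0 ≤ P g x))
    (hP'pos : ∀ g : Lp ℝ 2 μ, (∀ᵐ x ∂μ, 0 ≤ g x) → (∀ᵐ x ∂μ, 0 ≤ P' g x))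
    (one : Lp ℝ 2 μ) (hone : (one : X → ℝ) =ᵐ[μ] fun _ => (1 : ℝ))
    (a : ℝ) (ha0 : 0 < a) (ha1 : a < 1)
    (hconv : Θ = a • P + (1 - a) • P') (h : Lp ℝ 2 μ) :
    ∀ᵐ x ∂μ, |P h x| ≤ a⁻¹ * ‖h‖ := by
  have hA : ∀ᵐ x ∂μ, 0 ≤ P' |h| x := hP'pos _ <| by
    filter_upwards [Lp.coeFn_abs h] with x hx
    rw [hx]; exact abs_nonneg _
  have hB : ∀ᵐ x ∂μ, 0 ≤ P (|h| - h) x := hPpos _ <| by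
    filter_upwards [Lp.coeFn_abs h, Lp.coeFn_sub |h| h] with x hx hx2
    rw [hx2, Pi.sub_apply, hx]; linarith [le_abs_self (h x)]
  have hC : ∀ᵐ x ∂μ, 0 ≤ P (|h| + h) x := hPpos _ <| by
    filter_upwards [Lp.coeFn_abs h, Lp.coeFn_add |h| h] with x hx hx2
    rw [hx2, Pi.add_apply, hx]; linarith [neg_abs_le (h x)]
  rw [map_sub] at hB
  rw [map_add] at hC
  have hD : Θ |h| = a • P |h| + (1 - a) • P' |h| := by rw [hconv]; rfl
  have hE := hΘ |h|
  rw [hD] at hE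
  filter_upwards [hA, hB, hC, hE, Lp.coeFn_sub (P |h|) (P h), Lp.coeFn_add (P |h|) (P h),
    Lp.coeFn_add (a • P |h|) ((1 - a) • P' |h|), Lp.coeFn_smul a (P |h|),
    Lp.coeFn_smul (1 - a) (P' |h|)] with x xA xB xC xE x1 x2 x3 x4 x5
  rw [x1, Pi.sub_apply] at xB
  rw [x2, Pi.add_apply] at xC
  rw [x3, Pi.add_apply, x4, x5, Pi.smul_apply, Pi.smul_apply, smul_eq_mul, smul_eq_mul] at xE
  have hn := integral_abs_le_norm one hone h
  have h6 : |P h x| ≤ P |h| x := abs_le.2 ⟨by linarith, by linarith⟩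
  have h7 : 0 ≤ (1 - a) * P' |h| x := mul_nonneg (by linarith) xA
  rw [le_inv_mul_iff₀ ha0]
  have h8 := mul_le_mul_of_nonneg_left h6 ha0.le
  linarith

end MarkovExtreme


/-- **Θ is an extreme point of the Markov centralizer of a weakly mixing
transformation.** Let `T` be an invertible weakly mixing measure-preserving
transformation of a probability space, `U` the Koopman operator `Ug = g ∘ T` on
`L²(μ)` and `Θ` the projection onto constants `Θg = (∫ g dμ)·1`. If `P, P'` are
Markov operators (positive, `P1 = 1`, `P*1 = 1`) commuting with `U` and
`Θ = a·P + (1-a)·P'` with `0 < a < 1`, then `P = Θ`. -/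
theorem proj_onto_constants_extreme_in_markov_centralizer
    {X : Type*} [MeasurableSpace X] (μ : Measure X) [IsProbabilityMeasure μ]
    (T : X → X) (hT : MeasurePreserving T μ μ) (hTbij : Function.Bijective T)
    (hwm : Ergodic (fun p : X × X => (T p.1, T p.2)) (μ.prod μ))
    (U Θ P P' : Lp ℝ 2 μ →L[ℝ] Lp ℝ 2 μ)
    (hU : ∀ g : Lp ℝ 2 μ, (U g : X → ℝ) =ᵐ[μ] fun x => g (T x))
    (hΘ : ∀ g : Lp ℝ 2 μ, (Θ g : X → ℝ) =ᵐ[μ] fun _ => ∫ x, g x ∂μ)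
    (hPpos : ∀ g : Lp ℝ 2 μ, (∀ᵐ x ∂μ, 0 ≤ g x) → (∀ᵐ x ∂μ, 0 ≤ P g x))
    (hP'pos : ∀ g : Lp ℝ 2 μ, (∀ᵐ x ∂μ, 0 ≤ g x) → (∀ᵐ x ∂μ, 0 ≤ P' g x))
    (one : Lp ℝ 2 μ) (hone : (one : X → ℝ) =ᵐ[μ] fun _ => (1 : ℝ))
    (hP1 : P one = one) (hPadj1 : (ContinuousLinearMap.adjoint P) one = one)
    (hP'1 : P' one = one) (hP'adj1 : (ContinuousLinearMap.adjoint P') one = one)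
    (hPU : P ∘L U = U ∘L P) (hP'U : P' ∘L U = U ∘L P')
    (a : ℝ) (ha0 : 0 < a) (ha1 : a < 1)
    (hconv : Θ = a • P + (1 - a) • P') :
    P = Θ := by
  have hP := MarkovExtreme.ae_abs_apply_le Θ P P' hΘ hPpos hP'pos one hone a ha0 ha1 hconv
  ext1 g
  set m := ∫ x, g x ∂μ with hm
  have h1 : Θ g = m • one := by
    refine Lp.ext ?_
    filter_upwards [hΘ g, Lp.coeFn_smul m one, hone] with x h1 h2 h3
    rw [h1, h2, Pi.smul_apply, h3, smul_eq_mul, mul_one]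
  have h2 : ∫ x, (g - m • one : Lp ℝ 2 μ) x ∂μ = 0 := by
    have hae : ((g - m • one : Lp ℝ 2 μ) : X → ℝ) =ᵐ[μ] fun x => g x - m := by
      filter_upwards [Lp.coeFn_sub g (m • one), Lp.coeFn_smul m one, hone] with x h1 h2 h3
      rw [h1, Pi.sub_apply, h2, Pi.smul_apply, h3, smul_eq_mul, mul_one]
    have hgi : Integrable (fun x => g x) μ := (Lp.memLp g).integrable one_le_two
    rw [integral_congr_ae hae, integral_sub hgi (integrable_const _)]
    simp [hm]
  have h3 := MarkovExtreme.apply_eq_zero_of_integral_eq_zero hT hwm U P hU hPU hP _ h2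
  rw [map_sub, map_smul, hP1, sub_eq_zero] at h3
  rw [h3, h1]
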